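/- Let (A, 𝔪, k) be a commutative Noetherian local ring and suppose M is a finitely generated A-module of free reducible complexity with cx M = c > 0; choose modules M = K_0, K_1, …, K_c, integers n_1, …, n_c ≥ 0 and exact sequences 0 → K_{i−1} → K_i → Ω^{n_i}_A(K_{i−1}) → 0 with cx K_i = c − i, and set b = max_i { depth A − depth K_i }. Then for any finitely generated A-module N the following are equivalent: (i) there exists an integer t > b such that Tor^A_{t+i}(M,N) = 0 for all 0 ≤ i ≤ n_1 + ⋯ + n_c; (ii) Tor^A_i(M,N) = 0 for all i ≫ 0; (iii) Tor^A_i(M,N) = 0 for all i > b. -/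

import Mathlib

open CategoryTheory Opposite Filter IsLocalRing

universe u

namespace ComplexityTest

variable (A : Type u) [CommRing A] [IsLocalRing A]

structure MinFreeRes (M : Type u) [AddCommGroup M] [Module A M] : Type u where
  b : ℕ → ℕ
  d : (n : ℕ) → ((Fin (b (n + 1)) → A) →ₗ[A] (Fin (b n) → A))
  aug : (Fin (b 0) → A) →ₗ[A] M
  aug_surjective : Function.Surjective aug
  exact_zero : Function.Exact (d 0) aug
  exact_succ : ∀ n, Function.Exact (d (n + 1)) (d n)
  minimal : ∀ n x i, d n x i ∈ maximalIdeal A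

variable (M : Type u) [AddCommGroup M] [Module A M]

def HasComplexityLE (t : ℕ) : Prop :=
  ∃ (R : MinFreeRes A M) (a : ℝ), ∀ᶠ n : ℕ in atTop, (R.b n : ℝ) ≤ a * (n : ℝ) ^ ((t : ℤ) - 1)

noncomputable def complexity : ℕ∞ :=
  sInf {c : ℕ∞ | ∃ t : ℕ, c = t ∧ HasComplexityLE A M t}

def HasProjDimLE (t : ℕ) : Prop :=
  ∃ R : MinFreeRes A M, ∀ i, t < i → R.b i = 0

noncomputable def projDim : ℕ∞ :=
  sInf {c : ℕ∞ | ∃ t : ℕ, c = t ∧ HasProjDimLE A M t}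

def HasFiniteProjDim : Prop :=
  ∃ t : ℕ, HasProjDimLE A M t

def IsSyzygyOf (S : Type u) [AddCommGroup S] [Module A S] : ℕ → Prop
  | 0 => Nonempty (S ≃ₗ[A] M)
  | 1 => ∃ R : MinFreeRes A M, Nonempty (S ≃ₗ[A] (LinearMap.ker R.aug))
  | (n + 2) => ∃ R : MinFreeRes A M, Nonempty (S ≃ₗ[A] (LinearMap.ker (R.d n)))

variable {A M} in
def IsSES {K S : Type u} [AddCommGroup K] [Module A K] [AddCommGroup S] [Module A S]
    (f : M →ₗ[A] K) (g : K →ₗ[A] S) : Prop :=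
  Function.Injective f ∧ Function.Exact f g ∧ Function.Surjective g

noncomputable def extModule (n : ℕ) (N : Type u) [AddCommGroup N] [Module A N] :
    ModuleCat A :=
  ((_root_.Ext A (ModuleCat.{u} A) n).obj (op (ModuleCat.of A M))).obj (ModuleCat.of A N)

def extVanish (n : ℕ) (N : Type u) [AddCommGroup N] [Module A N] : Prop :=
  Subsingleton (extModule A M n N)

/-- The `n`-th Tor module `Tor^A_n(M, N)`. -/
noncomputable def torModule (n : ℕ) (N : Type u) [AddCommGroup N] [Module A N] :
    ModuleCat A :=
  ((Tor (ModuleCat.{u} A) n).obj (ModuleCat.of A M)).obj (ModuleCat.of A N)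

/-- The vanishing `Tor^A_n(M, N) = 0`. -/
def torVanish (n : ℕ) (N : Type u) [AddCommGroup N] [Module A N] : Prop :=
  Subsingleton (torModule A M n N)

noncomputable def depth : ℕ∞ :=
  sInf {c : ℕ∞ | ∃ i : ℕ, c = i ∧ ¬ extVanish A (ResidueField A) i M}

variable {A}

/-- The category of modules of *free reducible complexity* over the local ring `A`.
It is defined inductively: every finitely generated module of finite projective
dimension has free reducible complexity, and a finitely generated module `M` of finite
positive complexity has free reducible complexity provided there is a short exact
sequence `0 → M → K → Ω^n_A(M) → 0` (necessarily induced by a cohomology element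
`η ∈ Ext^{n+1}_A(M,M)`) where `K` is a finitely generated module of free reducible
complexity with `cx K = cx M - 1`. -/
inductive HasFreeRedCxCat : ModuleCat.{u} A → Prop
  | of_finite_projDim (M : ModuleCat.{u} A) (hfg : Module.Finite A M)
      (h : HasFiniteProjDim A M) : HasFreeRedCxCat M
  | step (M K S : ModuleCat.{u} A) (n : ℕ)
      (hfg : Module.Finite A M) (hKfg : Module.Finite A K)
      (hpos : 0 < complexity A M) (hfin : complexity A M ≠ ⊤)
      (hsyz : IsSyzygyOf A M S n)
      (f : M →ₗ[A] K) (g : K →ₗ[A] S) (hses : IsSES f g)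
      (hcx : complexity A K = complexity A M - 1)
      (hK : HasFreeRedCxCat K) : HasFreeRedCxCat M

/-- The category of modules of *reducible complexity* over the local ring `A`: as for
free reducible complexity, but where in addition the reductions are required to
preserve depth. -/
inductive HasRedCxCat : ModuleCat.{u} A → Prop
  | of_finite_projDim (M : ModuleCat.{u} A) (hfg : Module.Finite A M)
      (h : HasFiniteProjDim A M) : HasRedCxCat M
  | step (M K S : ModuleCat.{u} A) (n : ℕ)
      (hfg : Module.Finite A M) (hKfg : Module.Finite A K)
      (hpos : 0 < complexity A M) (hfin : complexity A M ≠ ⊤)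
      (hsyz : IsSyzygyOf A M S n)
      (f : M →ₗ[A] K) (g : K →ₗ[A] S) (hses : IsSES f g)
      (hcx : complexity A K = complexity A M - 1)
      (hdepth : depth A K = depth A M)
      (hK : HasRedCxCat K) : HasRedCxCat M

variable (A)

/-- `M` has free reducible complexity. -/
def HasFreeRedCx (M : Type u) [AddCommGroup M] [Module A M] : Prop :=
  HasFreeRedCxCat (ModuleCat.of A M)

/-- `M` has reducible complexity. -/
def HasRedCx (M : Type u) [AddCommGroup M] [Module A M] : Prop :=
  HasRedCxCat (ModuleCat.of A M)

/-- A Noetherian local ring is Gorenstein if it has finite injective dimension over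
itself; by Bass' characterization, this is equivalent to the vanishing of
`Ext^i_A(k, A)` for all sufficiently large `i`. -/
def IsGorenstein : Prop :=
  ∃ n : ℕ, ∀ i : ℕ, n < i → extVanish A (ResidueField A) i A

end ComplexityTest

open ComplexityTest


theorem aux_exact_op {A : Type u} [CommRing A] (X Y : ModuleCat.{u} A)
    (P : ProjectiveResolution X) (n : ℕ) :
    Subsingleton (((_root_.Ext A (ModuleCat.{u} A) (n+1)).obj (op X)).obj Y) ↔
      ∀ f : P.complex.X (n+1) ⟶ Y, P.complex.d (n+2) (n+1) ≫ f = 0 →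
        ∃ g : P.complex.X n ⟶ Y, P.complex.d (n+1) n ≫ g = f := by
  rw [← ModuleCat.isZero_iff_subsingleton, (P.isoExt (R := A) (n+1) Y).isZero_iff,
    ← HomologicalComplex.exactAt_iff_isZero_homology,
    HomologicalComplex.exactAt_iff' _ n (n+1) (n+2) (by simp) (by simp),
    ShortComplex.moduleCat_exact_iff]
  rfl

theorem aux_exact_op_zero {A : Type u} [CommRing A] (X Y : ModuleCat.{u} A)
    (P : ProjectiveResolution X) :
    Subsingleton (((_root_.Ext A (ModuleCat.{u} A) 0).obj (op X)).obj Y) ↔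
      ∀ f : P.complex.X 0 ⟶ Y, P.complex.d 1 0 ≫ f = 0 → f = 0 := by
  rw [← ModuleCat.isZero_iff_subsingleton, (P.isoExt (R := A) 0 Y).isZero_iff,
    ← HomologicalComplex.exactAt_iff_isZero_homology,
    HomologicalComplex.exactAt_iff' _ 0 0 1 (by simp) (by simp),
    ShortComplex.moduleCat_exact_iff]
  constructor
  · intro h f hf
    obtain ⟨g, hg⟩ := h f hf
    have h0 : P.complex.d 0 0 = 0 := P.complex.shape _ _ (by simp)
    have : P.complex.d 0 0 ≫ (show P.complex.X 0 ⟶ Y from g) = f := hg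
    rw [← this, h0, Limits.zero_comp]
  · intro h f hf
    have := h f hf
    exact ⟨0, by rw [map_zero]; exact this.symm⟩

theorem ext_bridge {A : Type u} [CommRing A] (X Y : ModuleCat.{u} A) (n : ℕ) :
    Subsingleton (((_root_.Ext A (ModuleCat.{u} A) n).obj (op X)).obj Y) ↔
      Subsingleton (Abelian.Ext X Y n) := by
  have P := projectiveResolution X
  cases n with
  | zero =>
    rw [aux_exact_op_zero X Y P, (Abelian.Ext.addEquiv₀).toEquiv.subsingleton_congr]
    constructor
    · intro h
      refine ⟨fun f g => ?_⟩
      have hz : ∀ f : X ⟶ Y, f = 0 := by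
        intro f
        have := h (P.π.f 0 ≫ f) ((P.complex_d_comp_π_f_zero_assoc f).trans Limits.zero_comp)
        have he : Epi (P.π.f 0) := inferInstance
        apply he.left_cancellation
        rw [this]
        erw [Limits.comp_zero]
      rw [hz f, hz g]
    · intro h f hf
      have := P.exact₀
      have hs := P.exact₀.desc' (k := f) hf
      obtain ⟨l, hl⟩ := hs
      rw [← hl]
      have : l = 0 := by
        exact h.elim (α := X ⟶ Y) _ _
      rw [this]
      exact Limits.comp_zero
  | succ n =>
    rw [aux_exact_op X Y P]
    constructor
    · intro h
      refine subsingleton_of_forall_eq 0 fun x => ?_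
      obtain ⟨f, hf, rfl⟩ := P.extMk_surjective x (n+2) rfl
      rw [P.extMk_eq_zero_iff f _ rfl hf n rfl]
      exact h f hf
    · intro h f hf
      rw [← P.extMk_eq_zero_iff f (n+2) rfl hf n rfl]
      exact Subsingleton.elim _ _


/-- The short complex of complexes `M ⊗ P → K ⊗ P → S ⊗ P`. -/
noncomputable def torCx {A : Type u} [CommRing A] (P : ChainComplex (ModuleCat.{u} A) ℕ)
    (X : ModuleCat.{u} A) : ChainComplex (ModuleCat.{u} A) ℕ :=
  (((MonoidalCategory.tensoringLeft (ModuleCat.{u} A)).obj X).mapHomologicalComplex _).obj P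

noncomputable def torCxMap {A : Type u} [CommRing A] (P : ChainComplex (ModuleCat.{u} A) ℕ)
    {X Y : ModuleCat.{u} A} (f : X ⟶ Y) : torCx P X ⟶ torCx P Y :=
  (NatTrans.mapHomologicalComplex ((MonoidalCategory.tensoringLeft (ModuleCat.{u} A)).map f) _).app P

theorem torVanish_iff {A : Type u} [CommRing A] [IsLocalRing A] (M N : Type u)
    [AddCommGroup M] [Module A M] [AddCommGroup N] [Module A N]
    (P : ProjectiveResolution (ModuleCat.of A N)) (n : ℕ) :
    torVanish A M n N ↔ Limits.IsZero ((torCx P.complex (ModuleCat.of A M)).homology n) := by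
  unfold torVanish torModule
  rw [← ModuleCat.isZero_iff_subsingleton]
  exact (P.isoLeftDerivedObj _ n).isZero_iff

theorem tor_ses {A : Type u} [CommRing A] [IsLocalRing A] {M K S : Type u} (N : Type u)
    [AddCommGroup M] [Module A M] [AddCommGroup N] [Module A N]
    [AddCommGroup K] [Module A K] [AddCommGroup S] [Module A S]
    (P : ProjectiveResolution (ModuleCat.of A N))
    (f : M →ₗ[A] K) (g : K →ₗ[A] S) (h : IsSES f g) :
    ∃ w, (ShortComplex.mk (torCxMap P.complex (ModuleCat.ofHom f))
      (torCxMap P.complex (ModuleCat.ofHom g)) w).ShortExact := by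
  have key : ∀ i, Function.Injective (f.rTensor (P.complex.X i)) ∧
      Function.Exact (f.rTensor (P.complex.X i)) (g.rTensor (P.complex.X i)) ∧
      Function.Surjective (g.rTensor (P.complex.X i)) := by
    intro i
    have hp : Module.Projective A (P.complex.X i) :=
      (IsProjective.iff_projective _).2 (P.projective i)
    have := Module.Flat.of_projective (R := A) (M := P.complex.X i)
    exact ⟨Module.Flat.rTensor_preserves_injective_linearMap _ h.1,
      rTensor_exact _ h.2.1 h.2.2, LinearMap.rTensor_surjective _ h.2.2⟩
  have w : torCxMap P.complex (ModuleCat.ofHom f) ≫ torCxMap P.complex (ModuleCat.ofHom g) = 0 := by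
    ext i x
    exact (key i).2.1.apply_apply_eq_zero x
  refine ⟨w, HomologicalComplex.shortExact_of_degreewise_shortExact _ fun i => ?_⟩
  refine @ShortComplex.ShortExact.mk _ _ _ _ ?_ ?_ ?_
  · rw [ShortComplex.ShortExact.moduleCat_exact_iff_function_exact]
    exact (key i).2.1
  · rw [ModuleCat.mono_iff_injective]
    exact (key i).1
  · rw [ModuleCat.epi_iff_surjective]
    exact (key i).2.2

section
variable {A : Type u} [CommRing A] [IsLocalRing A] {M K S : Type u} {N : Type u}
    [AddCommGroup M] [Module A M] [AddCommGroup N] [Module A N]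
    [AddCommGroup K] [Module A K] [AddCommGroup S] [Module A S]
    {f : M →ₗ[A] K} {g : K →ₗ[A] S}

theorem tor_mid (h : IsSES f g) (i : ℕ)
    (h1 : torVanish A M i N) (h2 : torVanish A S i N) : torVanish A K i N := by
  have P := projectiveResolution (ModuleCat.of A N)
  rw [torVanish_iff _ _ P] at *
  obtain ⟨w, hs⟩ := tor_ses N P f g h
  exact (hs.homology_exact₂ i).isZero_of_both_zeros (h1.eq_of_src _ _) (h2.eq_of_tgt _ _)

theorem tor_left (h : IsSES f g) (i : ℕ)
    (h1 : torVanish A S (i+1) N) (h2 : torVanish A K i N) : torVanish A M i N := by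
  have P := projectiveResolution (ModuleCat.of A N)
  rw [torVanish_iff _ _ P] at *
  obtain ⟨w, hs⟩ := tor_ses N P f g h
  exact (hs.homology_exact₁ (i+1) i (by simp)).isZero_of_both_zeros
    (h1.eq_of_src _ _) (h2.eq_of_tgt _ _)

theorem tor_right (h : IsSES f g) (i : ℕ)
    (h1 : torVanish A K (i+1) N) (h2 : torVanish A M i N) : torVanish A S (i+1) N := by
  have P := projectiveResolution (ModuleCat.of A N)
  rw [torVanish_iff _ _ P] at *
  obtain ⟨w, hs⟩ := tor_ses N P f g h
  exact (hs.homology_exact₃ (i+1) i (by simp)).isZero_of_both_zeros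
    (h1.eq_of_src _ _) (h2.eq_of_tgt _ _)

theorem tor_zero [Subsingleton M] (i : ℕ) : torVanish A M i N := by
  have P := projectiveResolution (ModuleCat.of A N)
  rw [torVanish_iff _ _ P, ← HomologicalComplex.exactAt_iff_isZero_homology]
  apply ShortComplex.exact_of_isZero_X₂
  rw [ModuleCat.isZero_iff_subsingleton]
  exact inferInstanceAs (Subsingleton (TensorProduct A M (P.complex.X i)))

theorem tor_iso (e : M ≃ₗ[A] K) (i : ℕ) : torVanish A M i N ↔ torVanish A K i N := by
  have P := projectiveResolution (ModuleCat.of A N)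
  have h : IsSES (0 : PUnit.{u+1} →ₗ[A] M) e.toLinearMap := by
    refine ⟨Function.injective_of_subsingleton _, ?_, e.surjective⟩
    intro x
    simp only [LinearEquiv.coe_coe, LinearEquiv.map_eq_zero_iff, Set.mem_range,
      LinearMap.zero_apply, exists_const]
    exact eq_comm
  have h' : IsSES e.toLinearMap (0 : K →ₗ[A] PUnit.{u+1}) := by
    refine ⟨e.injective, ?_, Function.surjective_to_subsingleton _⟩
    intro x
    simp only [LinearMap.zero_apply, true_iff]
    exact e.surjective x
  exact ⟨fun hM => tor_mid h' i hM (tor_zero i), fun hK => tor_mid h i (tor_zero i) hK⟩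

theorem tor_flat [Module.Flat A M] (i : ℕ) : torVanish A M (i+1) N := by
  have P := projectiveResolution (ModuleCat.of A N)
  rw [torVanish_iff _ _ P, ← HomologicalComplex.exactAt_iff_isZero_homology,
    HomologicalComplex.exactAt_iff' _ (i+2) (i+1) i (by simp) (by simp),
    ShortComplex.ShortExact.moduleCat_exact_iff_function_exact]
  have := P.exact_succ i
  rw [ShortComplex.ShortExact.moduleCat_exact_iff_function_exact] at this
  exact Module.Flat.lTensor_exact (f := (P.complex.d (i+2) (i+1)).hom)
    (g := (P.complex.d (i+1) i).hom) M this

/-- The resolution of the first syzygy. -/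
def ComplexityTest.MinFreeRes.shift (R : MinFreeRes A M) : MinFreeRes A (LinearMap.ker R.aug) where
  b n := R.b (n+1)
  d n := R.d (n+1)
  aug := (R.d 0).codRestrict _ fun x => R.exact_zero.apply_apply_eq_zero x
  aug_surjective := by
    rintro ⟨x, hx⟩
    obtain ⟨y, hy⟩ := (R.exact_zero x).1 hx
    exact ⟨y, Subtype.ext hy⟩
  exact_zero := by
    intro x
    rw [← R.exact_succ 0 x]
    exact Subtype.ext_iff
  exact_succ n := R.exact_succ (n+1)
  minimal n := R.minimal (n+1)

theorem ker_ses (R : MinFreeRes A M) : IsSES (LinearMap.ker R.aug).subtype R.aug :=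
  ⟨Subtype.val_injective, by intro x; simp, R.aug_surjective⟩

theorem tor_ker (R : MinFreeRes A M) (i : ℕ) :
    torVanish A (LinearMap.ker R.aug) (i+1) N ↔ torVanish A M (i+2) N :=
  ⟨fun h => tor_right (ker_ses R) _ (tor_flat _) h,
   fun h => tor_left (ker_ses R) _ h (tor_flat _)⟩

theorem tor_ker_d (n : ℕ) : ∀ {M : Type u} [AddCommGroup M] [Module A M] (R : MinFreeRes A M)
    (i : ℕ), torVanish A (LinearMap.ker (R.d n)) (i+1) N ↔ torVanish A M (i+1+(n+2)) N := by
  induction n with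
  | zero =>
    intro M _ _ R i
    have : LinearMap.ker (R.d 0) = LinearMap.ker R.shift.aug := by
      ext x
      exact (Subtype.ext_iff (a1 := R.shift.aug x) (a2 := 0)).symm
    refine (tor_iso (LinearEquiv.ofEq _ _ this) _).trans ((tor_ker R.shift i).trans ?_)
    exact tor_ker R (i+1)
  | succ n ih =>
    intro M _ _ R i
    refine (ih R.shift i).trans ?_
    exact tor_ker R (i+1+(n+1))

theorem tor_syzygy {n : ℕ} (h : IsSyzygyOf A M S n) (i : ℕ) :
    torVanish A S (i+1) N ↔ torVanish A M (i+1+n) N := by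
  match n, h with
  | 0, h => exact tor_iso h.some _
  | 1, ⟨R, h⟩ => exact (tor_iso h.some _).trans (tor_ker R i)
  | n+2, ⟨R, h⟩ => exact (tor_iso h.some _).trans (tor_ker_d n R i)

theorem res_zero (R : MinFreeRes A M) (h : R.b 0 = 0) : Subsingleton M := by
  have : IsEmpty (Fin (R.b 0)) := by rw [h]; infer_instance
  exact R.aug_surjective.subsingleton

theorem tor_of_res (p : ℕ) : ∀ {M : Type u} [AddCommGroup M] [Module A M] (R : MinFreeRes A M),
    R.b p = 0 → ∀ i, torVanish A M (i + p) N := by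
  induction p with
  | zero =>
    intro M _ _ R h i
    have := res_zero R h
    exact tor_zero _
  | succ p ih =>
    intro M _ _ R h i
    exact tor_right (ker_ses R) (i+p) (tor_flat _) (ih R.shift h i)
end


section
variable {A : Type u} [CommRing A] [IsLocalRing A]

/-- Vanishing of `Ext^j(k, M)`, in terms of `Abelian.Ext`. -/
def EV (A : Type u) [CommRing A] [IsLocalRing A] (M : Type u) [AddCommGroup M] [Module A M]
    (j : ℕ) : Prop :=
  Subsingleton (Abelian.Ext (ModuleCat.of A (ResidueField A)) (ModuleCat.of A M) j)

theorem extVanish_iff_EV (M : Type u) [AddCommGroup M] [Module A M] (j : ℕ) :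
    extVanish A (ResidueField A) j M ↔ EV A M j :=
  ext_bridge _ _ _

theorem ext_smul_zero {Y : ModuleCat.{u} A} {j : ℕ} (a : A) (ha : a ∈ maximalIdeal A)
    (x : Abelian.Ext (ModuleCat.of A (ResidueField A)) Y j) : a • x = 0 := by
  have h0 : a • 𝟙 (ModuleCat.of A (ResidueField A)) = 0 := by
    ext y
    change a • (y : ResidueField A) = 0
    rw [Algebra.smul_def]
    have : algebraMap A (ResidueField A) a = 0 := (residue_eq_zero_iff a).2 ha
    rw [this, zero_mul]
  have : a • x = (Abelian.Ext.mk₀ (a • 𝟙 (ModuleCat.of A (ResidueField A)))).comp x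
      (zero_add j) := by simp [Abelian.Ext.mk₀_smul]
  rw [this, h0]
  simp

theorem ext_min_zero {n m j : ℕ} (φ : (Fin n → A) →ₗ[A] (Fin m → A))
    (h : ∀ x i, φ x i ∈ maximalIdeal A)
    (x : Abelian.Ext (ModuleCat.of A (ResidueField A)) (ModuleCat.of A (Fin n → A)) j) :
    x.comp (Abelian.Ext.mk₀ (ModuleCat.ofHom φ)) (add_zero j) = 0 := by
  have hφ : ModuleCat.ofHom φ = ∑ l : Fin n, ∑ i : Fin m, (φ (Pi.single l 1) i) •
      ModuleCat.ofHom ((LinearMap.single A (fun _ : Fin m => A) i) ∘ₗ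
        (LinearMap.proj l : (Fin n → A) →ₗ[A] A)) := by
    apply ModuleCat.hom_ext
    simp only [ModuleCat.hom_ofHom, ModuleCat.hom_sum, ModuleCat.hom_smul]
    refine (Pi.basisFun A (Fin n)).ext fun l => ?_
    ext i
    simp [Finset.sum_apply, Pi.single_apply, LinearMap.sum_apply]
  rw [hφ, Abelian.Ext.mk₀_sum, Abelian.Ext.comp_sum]
  refine Finset.sum_eq_zero fun l _ => ?_
  rw [Abelian.Ext.mk₀_sum, Abelian.Ext.comp_sum]
  refine Finset.sum_eq_zero fun i _ => ?_
  rw [Abelian.Ext.mk₀_smul, Abelian.Ext.comp_smul]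
  exact ext_smul_zero _ (h _ _) _

theorem ext_min_zero' {n m j : ℕ} (φ : (Fin n → A) →ₗ[A] (Fin m → A))
    (h : ∀ x i, φ x i ∈ maximalIdeal A) {L : Type u} [AddCommGroup L] [Module A L]
    (e : L →ₗ[A] (Fin n → A)) (ψ : L →ₗ[A] (Fin m → A)) (hψ : ∀ z, ψ z = φ (e z))
    (x : Abelian.Ext (ModuleCat.of A (ResidueField A)) (ModuleCat.of A L) j) :
    x.comp (Abelian.Ext.mk₀ (ModuleCat.ofHom ψ)) (add_zero j) = 0 := by
  have this := ext_min_zero φ h (x.comp (Abelian.Ext.mk₀ (ModuleCat.ofHom e)) (add_zero j))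
  obtain rfl : ψ = φ ∘ₗ e := LinearMap.ext hψ
  rwa [Abelian.Ext.comp_assoc_of_third_deg_zero, Abelian.Ext.mk₀_comp_mk₀,
    ← ModuleCat.ofHom_comp] at this

theorem EV_retract {M L : Type u} [AddCommGroup M] [Module A M] [AddCommGroup L] [Module A L]
    (s : L →ₗ[A] M) (r : M →ₗ[A] L) (h : r ∘ₗ s = LinearMap.id) {j : ℕ} (hM : EV A M j) :
    EV A L j := by
  refine subsingleton_of_forall_eq 0 fun x => ?_
  have h1 : x.comp (Abelian.Ext.mk₀ (ModuleCat.ofHom s)) (add_zero j) = 0 :=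
    hM.elim _ _
  have h2 : x = (x.comp (Abelian.Ext.mk₀ (ModuleCat.ofHom s)) (add_zero j)).comp
      (Abelian.Ext.mk₀ (ModuleCat.ofHom r)) (add_zero j) := by
    rw [Abelian.Ext.comp_assoc_of_third_deg_zero, Abelian.Ext.mk₀_comp_mk₀,
      ← ModuleCat.ofHom_comp, h, ModuleCat.ofHom_id, Abelian.Ext.comp_mk₀_id]
  rw [h2, h1, Abelian.Ext.zero_comp]

theorem EV_pi {n j : ℕ} (h : EV A A j) : EV A (Fin n → A) j := by
  refine subsingleton_of_forall_eq 0 fun x => ?_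
  have hid : 𝟙 (ModuleCat.of A (Fin n → A)) = ∑ i : Fin n,
      ModuleCat.ofHom (LinearMap.proj i : (Fin n → A) →ₗ[A] A) ≫
      ModuleCat.ofHom (LinearMap.single A (fun _ : Fin n => A) i) := by
    apply ModuleCat.hom_ext
    simp only [ModuleCat.hom_sum, ModuleCat.hom_id, ModuleCat.hom_comp, ModuleCat.hom_ofHom]
    refine (Pi.basisFun A (Fin n)).ext fun l => ?_
    ext i
    simp [Finset.sum_apply, Pi.single_apply, LinearMap.sum_apply]
  rw [← Abelian.Ext.comp_mk₀_id x, hid, Abelian.Ext.mk₀_sum, Abelian.Ext.comp_sum]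
  refine Finset.sum_eq_zero fun i _ => ?_
  rw [← Abelian.Ext.mk₀_comp_mk₀, ← Abelian.Ext.comp_assoc_of_third_deg_zero]
  have : x.comp (Abelian.Ext.mk₀ (ModuleCat.ofHom
    (LinearMap.proj i : (Fin n → A) →ₗ[A] A))) (add_zero j) = 0 := h.elim _ _
  rw [this, Abelian.Ext.zero_comp]

theorem ses_shortExact {M K S : Type u} [AddCommGroup M] [Module A M]
    [AddCommGroup K] [Module A K] [AddCommGroup S] [Module A S]
    {f : M →ₗ[A] K} {g : K →ₗ[A] S} (h : IsSES f g) :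
    ∃ w, (ShortComplex.mk (ModuleCat.ofHom f) (ModuleCat.ofHom g) w).ShortExact := by
  have w : ModuleCat.ofHom f ≫ ModuleCat.ofHom g = 0 := by
    ext x
    exact h.2.1.apply_apply_eq_zero x
  refine ⟨w, @ShortComplex.ShortExact.mk _ _ _ _ ?_ ?_ ?_⟩
  · rw [ShortComplex.ShortExact.moduleCat_exact_iff_function_exact]
    exact h.2.1
  · rw [ModuleCat.mono_iff_injective]
    exact h.1
  · rw [ModuleCat.epi_iff_surjective]
    exact h.2.2

/-- If `Ext^j(k, M) → Ext^j(k, K)` is zero and the source is nonzero, then `j = i + 1` with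
`Ext^i(k, S)` nonzero. -/
theorem ext_drop {M K S : Type u} [AddCommGroup M] [Module A M]
    [AddCommGroup K] [Module A K] [AddCommGroup S] [Module A S]
    {f : M →ₗ[A] K} {g : K →ₗ[A] S} (h : IsSES f g) {j : ℕ} (hj : ¬ EV A M j)
    (hz : ∀ x : Abelian.Ext (ModuleCat.of A (ResidueField A)) (ModuleCat.of A M) j,
      x.comp (Abelian.Ext.mk₀ (ModuleCat.ofHom f)) (add_zero j) = 0) :
    ∃ i, i + 1 = j ∧ ¬ EV A S i := by
  obtain ⟨w, hs⟩ := ses_shortExact h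
  cases j with
  | zero =>
    exfalso
    apply hj
    refine subsingleton_of_forall_eq 0 fun x => ?_
    have : Mono (ModuleCat.ofHom f) := hs.mono_f
    apply Abelian.Ext.postcomp_mk₀_injective_of_mono _ (ModuleCat.ofHom f)
    simpa using hz x
  | succ i =>
    refine ⟨i, rfl, fun hS => hj ?_⟩
    refine subsingleton_of_forall_eq 0 fun x => ?_
    obtain ⟨y, rfl⟩ := Abelian.Ext.covariant_sequence_exact₁ _ hs x (hz x) rfl
    rw [show y = 0 from hS.elim _ _, Abelian.Ext.zero_comp]

theorem aug_injective {M : Type u} [AddCommGroup M] [Module A M] (R : MinFreeRes A M)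
    (h : R.b 1 = 0) : Function.Injective R.aug := by
  rw [injective_iff_map_eq_zero]
  intro x hx
  obtain ⟨y, rfl⟩ := (R.exact_zero x).1 hx
  have : IsEmpty (Fin (R.b (0+1))) := by rw [zero_add, h]; infer_instance
  rw [Subsingleton.elim y 0, map_zero]

/-- The inequality half of the Auslander-Buchsbaum formula. -/
theorem auslander_buchsbaum {d : ℕ} (hd : ¬ EV A A d) (hlt : ∀ i < d, EV A A i) (p : ℕ) :
    ∀ {M : Type u} [AddCommGroup M] [Module A M] (R : MinFreeRes A M), R.b p ≠ 0 →
      R.b (p+1) = 0 → ∃ j, j + p = d ∧ ¬ EV A M j := by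
  induction p with
  | zero =>
    intro M _ _ R h0 h1
    refine ⟨d, rfl, fun hM => hd ?_⟩
    let e := LinearEquiv.ofBijective R.aug ⟨aug_injective R h1, R.aug_surjective⟩
    let i0 : Fin (R.b 0) := ⟨0, Nat.pos_of_ne_zero h0⟩
    refine EV_retract (e.toLinearMap ∘ₗ LinearMap.single A (fun _ => A) i0)
      (LinearMap.proj i0 ∘ₗ e.symm.toLinearMap) ?_ hM
    ext
    simp
  | succ p ih =>
    intro M _ _ R h0 h1
    obtain ⟨j, hj, hne⟩ := ih R.shift h0 h1
    suffices hz : ∀ x : Abelian.Ext (ModuleCat.of A (ResidueField A))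
        (ModuleCat.of A (LinearMap.ker R.aug)) j, x.comp
        (Abelian.Ext.mk₀ (ModuleCat.ofHom (LinearMap.ker R.aug).subtype)) (add_zero j) = 0 by
      obtain ⟨i, hi, hi'⟩ := ext_drop (ker_ses R) hne hz
      exact ⟨i, by omega, hi'⟩
    intro x
    by_cases hp : p = 0
    · subst hp
      let e : (Fin (R.b 1) → A) ≃ₗ[A] LinearMap.ker R.aug := LinearEquiv.ofBijective R.shift.aug
        ⟨aug_injective R.shift h1, R.shift.aug_surjective⟩
      refine ext_min_zero' (R.d 0) (R.minimal 0) e.symm.toLinearMap _ ?_ x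
      intro z
      obtain ⟨z, rfl⟩ := e.surjective z
      exact (congrArg (R.d 0) (e.symm_apply_apply z)).symm
    · exact (EV_pi (n := R.b 0) (hlt j (by omega))).elim _ _

theorem depth_finite (A : Type u) [CommRing A] [IsLocalRing A] [IsNoetherianRing A] :
    ∃ d, ¬ EV A A d := by
  by_contra! hall
  obtain ⟨D, hD⟩ : ∃ D : ℕ, ringKrullDim A = D := by
    obtain ⟨x, hx⟩ := WithBot.ne_bot_iff_exists.1 (ringKrullDim_ne_bot (R := A))
    have hx' : x ≠ ⊤ := by
      rintro rfl
      exact ringKrullDim_ne_top (R := A) hx.symm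
    obtain ⟨D, rfl⟩ := ENat.ne_top_iff_exists.1 hx'
    exact ⟨D, hx.symm⟩
  have hlt : maximalIdeal A • (⊤ : Submodule A A) < ⊤ := by
    rw [lt_top_iff_ne_top]
    simpa using (maximalIdeal.isMaximal A).ne_top
  have hsupp : Module.support A (ResidueField A) = PrimeSpectrum.zeroLocus (maximalIdeal A) := by
    rw [Module.support_eq_zeroLocus]
    congr 2
    exact Ideal.annihilator_quotient
  obtain ⟨rs, hl, hm, hreg⟩ := ModuleCat.exists_isRegular_of_exists_subsingleton_ext (maximalIdeal A) (D+1)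
    (ModuleCat.of A A) hlt (ModuleCat.of A (ResidueField A)) hsupp (fun i _ => hall i)
  have := ringKrullDim_add_length_eq_ringKrullDim_of_isRegular rs hreg
  rw [hD, hl] at this
  have hn : Nontrivial (A ⧸ Ideal.ofList rs) := by
    rw [Ideal.Quotient.nontrivial_iff]
    intro h
    have h1 : Ideal.ofList rs ≤ maximalIdeal A := by
      rw [Ideal.ofList, Ideal.span_le]
      exact hm
    rw [h, top_le_iff] at h1
    exact (maximalIdeal.isMaximal A).ne_top h1
  have h0 := ringKrullDim_nonneg_of_nontrivial (R := A ⧸ Ideal.ofList rs)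
  have h2 : ((D + 1 : ℕ) : WithBot ℕ∞) ≤ (D : ℕ) := by
    rw [← this]
    exact le_add_of_nonneg_left h0
  have h3 : D + 1 ≤ D := by exact_mod_cast h2
  omega
end


theorem depth_eq_nat (A : Type u) [CommRing A] [IsLocalRing A] [IsNoetherianRing A] :
    ∃ d : ℕ, depth A A = d ∧ ¬ EV A A d ∧ ∀ i < d, EV A A i := by
  classical
  have h := depth_finite A
  refine ⟨Nat.find h, ?_, Nat.find_spec h, fun i hi => not_not.1 (Nat.find_min h hi)⟩
  unfold depth
  apply le_antisymm
  · exact sInf_le ⟨_, rfl, by rw [extVanish_iff_EV]; exact Nat.find_spec h⟩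
  · refine le_sInf ?_
    rintro _ ⟨i, rfl, hi⟩
    rw [extVanish_iff_EV] at hi
    exact_mod_cast Nat.find_min' h hi

theorem depth_le {A : Type u} [CommRing A] [IsLocalRing A] {M : Type u} [AddCommGroup M]
    [Module A M] {j : ℕ} (h : ¬ EV A M j) : depth A M ≤ j :=
  sInf_le ⟨_, rfl, by rw [extVanish_iff_EV]; exact h⟩

theorem res_of_cx_zero {A : Type u} [CommRing A] [IsLocalRing A] {M : Type u} [AddCommGroup M]
    [Module A M] (h : complexity A M = 0) : ∃ R : MinFreeRes A M, ∃ p, ∀ i, p ≤ i → R.b i = 0 := by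
  have hne : {c : ℕ∞ | ∃ t : ℕ, c = t ∧ HasComplexityLE A M t}.Nonempty := by
    by_contra hem
    rw [Set.not_nonempty_iff_eq_empty] at hem
    rw [complexity, hem, sInf_empty] at h
    exact absurd h (by simp)
  have hmem := csInf_mem hne
  rw [show sInf {c : ℕ∞ | ∃ t : ℕ, c = t ∧ HasComplexityLE A M t} = 0 from h] at hmem
  obtain ⟨t, ht, R, a, hR⟩ := hmem
  obtain rfl : t = 0 := by exact_mod_cast ht.symm
  obtain ⟨p, hp⟩ := eventually_atTop.1 hR
  obtain ⟨q, hq⟩ := exists_nat_gt a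
  refine ⟨R, max (p) (q+1), fun i hi => ?_⟩
  have h1 := hp i (le_trans (le_max_left _ _) hi)
  have h2 : q + 1 ≤ i := le_trans (le_max_right _ _) hi
  have hi0 : (0 : ℝ) < i := by exact_mod_cast (by omega : 0 < i)
  have h3 : (q : ℝ) < i := by exact_mod_cast (by omega : q < i)
  simp only [Nat.cast_zero, zero_sub, zpow_neg, zpow_one] at h1
  have h4 : (R.b i : ℝ) < 1 := by
    refine lt_of_le_of_lt h1 ?_
    rw [← div_eq_mul_inv, div_lt_one hi0]
    linarith
  have : R.b i < 1 := by exact_mod_cast h4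
  omega

theorem tor_base {A : Type u} [CommRing A] [IsLocalRing A] [IsNoetherianRing A]
    {M : Type u} [AddCommGroup M] [Module A M] (h : complexity A M = 0)
    (N : Type u) [AddCommGroup N] [Module A N] (i : ℕ)
    (hi : depth A A - depth A M < (i : ℕ∞)) : torVanish A M i N := by
  classical
  obtain ⟨R, hR⟩ := res_of_cx_zero h
  obtain ⟨d, hd, hd1, hd2⟩ := depth_eq_nat A
  have hs := Nat.find_spec hR
  rcases hq : Nat.find hR with _ | p
  · rw [hq] at hs
    exact tor_of_res 0 R (hs 0 le_rfl) i
  · rw [hq] at hs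
    have hp : R.b p ≠ 0 := by
      intro h0
      refine Nat.find_min hR (m := p) (by omega) fun i hi => ?_
      rcases hi.eq_or_lt with rfl | hi
      · exact h0
      · exact hs i hi
    obtain ⟨j, hj, hne⟩ := auslander_buchsbaum hd1 hd2 p R hp (hs _ le_rfl)
    have hle := depth_le hne
    have h1 : (p : ℕ∞) ≤ depth A A - depth A M := by
      refine le_trans ?_ (tsub_le_tsub_left hle _)
      rw [hd, ← hj]
      exact_mod_cast (by omega : p ≤ j + p - j)
    have h2 : p < i := by exact_mod_cast lt_of_le_of_lt h1 hi
    obtain ⟨l, rfl⟩ := Nat.exists_eq_add_of_lt h2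
    rw [show p + l + 1 = l + (p + 1) by omega]
    exact tor_of_res (p+1) R (hs _ le_rfl) l

theorem tor_step {A : Type u} [CommRing A] [IsLocalRing A] {M K S N : Type u}
    [AddCommGroup M] [Module A M] [AddCommGroup N] [Module A N]
    [AddCommGroup K] [Module A K] [AddCommGroup S] [Module A S]
    {f : M →ₗ[A] K} {g : K →ₗ[A] S} (h : IsSES f g) {n : ℕ} (hS : IsSyzygyOf A M S n)
    (B s : ℕ)
    (ih : (∃ t, B < t ∧ ∀ j ≤ s, torVanish A K (t + j) N) → ∀ i, B < i → torVanish A K i N)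
    (hM : ∃ t, B < t ∧ ∀ j ≤ n + s, torVanish A M (t + j) N) :
    ∀ i, B < i → torVanish A M i N := by
  obtain ⟨t, ht, hv⟩ := hM
  have hK : ∀ i, B < i → torVanish A K i N := by
    refine ih ⟨t, ht, fun j hj => tor_mid h _ (hv j (by omega)) ?_⟩
    obtain ⟨r, hr⟩ : ∃ r, t + j = r + 1 := ⟨t + j - 1, by omega⟩
    rw [hr, tor_syzygy hS, ← hr, show t + j + n = t + (j + n) by omega]
    exact hv _ (by omega)
  have hper : ∀ i, B < i → (torVanish A M (i + (n + 1)) N ↔ torVanish A M i N) := by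
    intro i hi
    rw [show i + (n + 1) = i + 1 + n by omega, ← tor_syzygy hS]
    exact ⟨fun hx => tor_left h i hx (hK i hi), fun hx => tor_right h i (hK (i+1) (by omega)) hx⟩
  have hup : ∀ j, torVanish A M (t + j) N := by
    intro j
    induction j using Nat.strong_induction_on with
    | _ j ihj =>
      by_cases hj : j ≤ n
      · exact hv j (by omega)
      · have := (hper (t + (j - (n+1))) (by omega)).2 (ihj _ (by omega))
        rwa [show t + (j - (n+1)) + (n+1) = t + j by omega] at this
  have hdown : ∀ k i, B < i → t ≤ i + k → torVanish A M i N := by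
    intro k
    induction k with
    | zero =>
      intro i hi hk
      have := hup (i - t)
      rwa [show t + (i - t) = i by omega] at this
    | succ k ihk =>
      intro i hi hk
      exact (hper i hi).1 (ihk _ (by omega) (by omega))
  exact fun i hi => hdown t i hi (by omega)

theorem tor_chain (A : Type u) [CommRing A] [IsLocalRing A]
    (c : ℕ) (K : Fin (c + 1) → Type u) [∀ i, AddCommGroup (K i)] [∀ i, Module A (K i)]
    (S : Fin c → Type u) [∀ i, AddCommGroup (S i)] [∀ i, Module A (S i)]
    (n : Fin c → ℕ)
    (hsyz : ∀ i : Fin c, IsSyzygyOf A (K i.castSucc) (S i) (n i))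
    (f : ∀ i : Fin c, K i.castSucc →ₗ[A] K i.succ)
    (g : ∀ i : Fin c, K i.succ →ₗ[A] S i)
    (hses : ∀ i : Fin c, IsSES (f i) (g i))
    (N : Type u) [AddCommGroup N] [Module A N] (B : ℕ)
    (hbase : ∀ i, B < i → torVanish A (K (Fin.last c)) i N) (a : Fin (c+1)) :
    (∃ t, B < t ∧ ∀ j ≤ ∑ l : Fin c with a ≤ l.castSucc, n l, torVanish A (K a) (t + j) N) →
      ∀ i, B < i → torVanish A (K a) i N := by
  induction a using Fin.reverseInduction with
  | last => exact fun _ => hbase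
  | cast a ih =>
    intro h
    refine tor_step (hses a) (hsyz a) B _ ih ?_
    convert h using 7
    rw [← Finset.sum_insert (f := n) (a := a)]
    · refine Finset.sum_congr ?_ fun _ _ => rfl
      ext l
      simp only [Finset.mem_insert, Finset.mem_filter, Finset.mem_univ, true_and, Fin.le_def,
        Fin.ext_iff, Fin.val_succ, Fin.val_castSucc]
      omega
    · simp [Fin.le_def]


/-- **Proposition 2.3 (homology vanishing)**: let `M` be a module of free reducible
complexity `c > 0`, with reduction data `M = K 0, K 1, …, K c`, integers `n 1, …, n c`
and short exact sequences `0 → K (i-1) → K i → Ω^{n i}(K (i-1)) → 0` with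
`cx (K i) = c - i`, and let `b = max_i (depth A - depth (K i))`. Then for any module
`N` the following are equivalent: (i) there is a `t > b` with `Tor_{t+j}(M,N) = 0` for
`0 ≤ j ≤ n 1 + ⋯ + n c`; (ii) `Tor_i(M,N) = 0` for `i ≫ 0`; (iii) `Tor_i(M,N) = 0`
for all `i > b`. -/
theorem torVanishing_of_hasFreeRedCx
    (A : Type u) [CommRing A] [IsLocalRing A] [IsNoetherianRing A]
    (M : Type u) [AddCommGroup M] [Module A M] [Module.Finite A M]
    (hM : HasFreeRedCx A M)
    (c : ℕ) (hcpos : 0 < c) (hcx : complexity A M = c)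
    (K : Fin (c + 1) → Type u) [∀ i, AddCommGroup (K i)] [∀ i, Module A (K i)]
    [∀ i, Module.Finite A (K i)]
    (e : K 0 ≃ₗ[A] M)
    (S : Fin c → Type u) [∀ i, AddCommGroup (S i)] [∀ i, Module A (S i)]
    (n : Fin c → ℕ)
    (hsyz : ∀ i : Fin c, IsSyzygyOf A (K i.castSucc) (S i) (n i))
    (f : ∀ i : Fin c, K i.castSucc →ₗ[A] K i.succ)
    (g : ∀ i : Fin c, K i.succ →ₗ[A] S i)
    (hses : ∀ i : Fin c, IsSES (f i) (g i))
    (hcxK : ∀ i : Fin c, complexity A (K i.succ) = (c : ℕ∞) - ((i : ℕ) + 1))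
    (N : Type u) [AddCommGroup N] [Module A N] [Module.Finite A N] :
    ((∃ t : ℕ, (⨆ i, (depth A A - depth A (K i))) < (t : ℕ∞) ∧
        ∀ j : ℕ, j ≤ ∑ i, n i → torVanish A M (t + j) N) ↔
      (∀ᶠ i in Filter.atTop, torVanish A M i N)) ∧
    ((∀ᶠ i in Filter.atTop, torVanish A M i N) ↔
      (∀ i : ℕ, (⨆ i, (depth A A - depth A (K i))) < (i : ℕ∞) → torVanish A M i N)) := by
  obtain ⟨d, hd, -, -⟩ := depth_eq_nat A
  have hb : (⨆ i, (depth A A - depth A (K i))) ≤ (d : ℕ∞) :=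
    iSup_le fun i => by rw [hd]; exact tsub_le_self
  obtain ⟨B, hB⟩ := ENat.ne_top_iff_exists.1 (ne_top_of_le_ne_top (ENat.natCast_ne_top d) hb)
  have hle : ∀ i, depth A A - depth A (K i) ≤ (B : ℕ∞) := fun i => by
    rw [hB]; exact le_iSup (fun i => depth A A - depth A (K i)) i
  rw [← hB]
  have hlast : complexity A (K (Fin.last c)) = 0 := by
    obtain ⟨c', rfl⟩ : ∃ c', c = c' + 1 := ⟨c - 1, by omega⟩
    have := hcxK (Fin.last c')
    rw [Fin.succ_last] at this
    rw [this]
    simp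
  have hchain := tor_chain A c K S n hsyz f g hses N B
    (fun i hi => tor_base hlast N i (lt_of_le_of_lt (hle _) (by exact_mod_cast hi))) 0
  simp only [Fin.zero_le, Finset.filter_true, tor_iso e] at hchain
  have h13 : (∃ t : ℕ, (B : ℕ∞) < (t : ℕ∞) ∧
      ∀ j : ℕ, j ≤ ∑ i, n i → torVanish A M (t + j) N) →
      ∀ i : ℕ, (B : ℕ∞) < (i : ℕ∞) → torVanish A M i N := by
    rintro ⟨t, ht, hv⟩ i hi
    exact hchain ⟨t, by exact_mod_cast ht, hv⟩ i (by exact_mod_cast hi)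
  have h32 : (∀ i : ℕ, (B : ℕ∞) < (i : ℕ∞) → torVanish A M i N) →
      ∀ᶠ i in Filter.atTop, torVanish A M i N := by
    intro h
    filter_upwards [eventually_gt_atTop B] with i hi
    exact h i (by exact_mod_cast hi)
  have h21 : (∀ᶠ i in Filter.atTop, torVanish A M i N) → (∃ t : ℕ, (B : ℕ∞) < (t : ℕ∞) ∧
      ∀ j : ℕ, j ≤ ∑ i, n i → torVanish A M (t + j) N) := by
    intro h
    obtain ⟨q, hq⟩ := eventually_atTop.1 h
    refine ⟨max q (B + 1), ?_, fun j _ => hq _ (by omega)⟩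
    exact_mod_cast (by omega : B < max q (B + 1))
  exact ⟨⟨fun h => h32 (h13 h), h21⟩, ⟨fun h => h13 (h21 h), h32⟩⟩
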